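/- Evidence-centric criterion for protection: let D = C(t,p,φ,e) be the data flow semantics of a Copland phrase. If every cross-place communication event v of D satisfies τ(ε(v)) ⊆ {ϱ(v)}, then D is protected. -/

import Mathlib

namespace Copland

/-- Places are drawn from a countable set. -/
abbrev Place := ℕ
/-- Symbols (measurement/target identifiers) are drawn from a countable set. -/
abbrev Symb := ℕ

/-- Splitting specifications: `+` or `-`. -/
inductive Split where
  | plus
  | minus
deriving DecidableEq, Repr

/-- Copland phrases. -/
inductive Phrase where
  | meas : Symb → Place → Symb → Phrase          -- measurement  m q s
  | att  : Place → Phrase → Phrase               -- @_q [ t ]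
  | copy : Phrase                                 -- _
  | sign : Phrase                                 -- !
  | hash : Phrase                                 -- #
  | lseq : Phrase → Phrase → Phrase               -- t1 → t2
  | bseq : Split → Split → Phrase → Phrase → Phrase  -- t1 d1<d2 t2
  | bpar : Split → Split → Phrase → Phrase → Phrase  -- t1 d1~d2 t2
deriving DecidableEq, Repr

/-- Evidence terms. -/
inductive Evidence where
  | empty : Evidence                                          -- ξ
  | meas : Symb → Place → Symb → Place → List ℕ → Evidence → Evidence  -- m(ms(m,q,s),p,φ,e)
  | sig  : Evidence → Place → Evidence                        -- [[e]]_p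
  | hash : Evidence → Place → Evidence                        -- #{e}_p
  | seqc : Evidence → Evidence → Evidence                     -- e1 ;; e2
  | parc : Evidence → Evidence → Evidence                     -- e1 || e2
deriving DecidableEq, Repr

/-- The effect `d(e)` of a splitting specification on evidence. -/
def splitEv : Split → Evidence → Evidence
  | .plus, e => e
  | .minus, _ => .empty

/-- The Copland evidence semantics `E(t,p,φ,e)`. -/
def eval : Phrase → Place → List ℕ → Evidence → Evidence
  | .meas m q s, p, φ, e => .meas m q s p φ e
  | .copy, _, _, e => e
  | .sign, p, _, e => .sig e p
  | .hash, p, _, e => .hash e p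
  | .att q t, _, φ, e => eval t q (1 :: φ) e
  | .lseq t1 t2, p, φ, e => eval t2 p (2 :: φ) (eval t1 p (1 :: φ) e)
  | .bseq d1 d2 t1 t2, p, φ, e =>
      .seqc (eval t1 p (1 :: φ) (splitEv d1 e)) (eval t2 p (2 :: φ) (splitEv d2 e))
  | .bpar d1 d2 t1 t2, p, φ, e =>
      .parc (eval t1 p (1 :: φ) (splitEv d1 e)) (eval t2 p (2 :: φ) (splitEv d2 e))

/-- Join operators: sequential `<` or parallel `~`. -/
inductive JoinOp where
  | seqJ
  | parJ
deriving DecidableEq, Repr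

/-- Event labels. -/
inductive Label where
  | msp   : Place → Evidence → Label                    -- p : msp(e)
  | cpy   : Place → Evidence → Label                    -- p : cpy(e)
  | sig   : Place → Evidence → Label                    -- p : sig(e)
  | hsh   : Place → Evidence → Label                    -- p : hsh(e)
  | req   : Place → Place → Evidence → Label            -- p : req(q,e)
  | rpy   : Place → Place → Evidence → Label            -- p : rpy(q,e)
  | split : Place → Split → Split → Evidence → Label    -- p : split(d1,d2,e)
  | join  : Place → JoinOp → Evidence → Label           -- p : join(o,e)
deriving DecidableEq, Repr

/-- The (sending) place `ϱ(v)`: the place before the colon in the label. -/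
def Label.place : Label → Place
  | .msp p _ => p
  | .cpy p _ => p
  | .sig p _ => p
  | .hsh p _ => p
  | .req p _ _ => p
  | .rpy p _ _ => p
  | .split p _ _ _ => p
  | .join p _ _ => p

/-- The receiving place `ϱ'(v)`. -/
def Label.recvPlace : Label → Place
  | .req _ q _ => q
  | .rpy _ q _ => q
  | l => l.place

/-- The evidence `ε(v)`: the last argument of the label. -/
def Label.evid : Label → Evidence
  | .msp _ e => e
  | .cpy _ e => e
  | .sig _ e => e
  | .hsh _ e => e
  | .req _ _ e => e
  | .rpy _ _ e => e
  | .split _ _ _ e => e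
  | .join _ _ e => e

/-- A measurement event is one whose label has the form `p : msp(e)`. -/
def Label.IsMeas (l : Label) : Prop := ∃ p e, l = .msp p e

/-- A cross-place communication event is one with `ϱ(v) ≠ ϱ'(v)`. -/
def Label.IsCross (l : Label) : Prop := l.place ≠ l.recvPlace

/-- A data flow graph: events are the naturals `0, …, n-1`, with an input event,
an output event, flow edges, and a labeling. -/
structure DFG where
  n : ℕ
  vin : ℕ
  vout : ℕ
  edges : List (ℕ × ℕ)
  label : ℕ → Label

namespace DFG

/-- Well-formedness of a data flow graph: events are in range, the flow
relation is acyclic, and there is no edge into the input event nor out of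
the output event. -/
def WF (G : DFG) : Prop :=
  G.vin < G.n ∧ G.vout < G.n ∧
  (∀ pr ∈ G.edges, pr.1 < G.n ∧ pr.2 < G.n) ∧
  (∀ v, ¬ Relation.TransGen (fun a b => (a, b) ∈ G.edges) v v) ∧
  (∀ pr ∈ G.edges, pr.2 ≠ G.vin ∧ pr.1 ≠ G.vout)

/-- The single-event data flow graph. -/
def single (l : Label) : DFG :=
  { n := 1, vin := 0, vout := 0, edges := [], label := fun _ => l }

/-- Before-copy composition: the second graph's events are renumbered after the
first's, and a flow edge links the output of the first to the input of the second. -/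
def seqComp (G1 G2 : DFG) : DFG :=
  { n := G1.n + G2.n
    vin := G1.vin
    vout := G1.n + G2.vout
    edges := G1.edges ++ G2.edges.map (fun pr => (G1.n + pr.1, G1.n + pr.2)) ++
      [(G1.vout, G1.n + G2.vin)]
    label := fun i => if i < G1.n then G1.label i else G2.label (i - G1.n) }

/-- Branching composition: a split event, the two subgraphs (with a flow edge from
the split into the input of a subgraph exactly when the corresponding splitting
specification is `+`), and a join event receiving flow from both outputs. -/
def branch (sp jn : Label) (d1 d2 : Split) (G1 G2 : DFG) : DFG :=
  { n := G1.n + G2.n + 2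
    vin := 0
    vout := G1.n + G2.n + 1
    edges :=
      G1.edges.map (fun pr => (pr.1 + 1, pr.2 + 1)) ++
      G2.edges.map (fun pr => (pr.1 + 1 + G1.n, pr.2 + 1 + G1.n)) ++
      (if d1 = Split.plus then [(0, G1.vin + 1)] else []) ++
      (if d2 = Split.plus then [(0, G2.vin + 1 + G1.n)] else []) ++
      [(G1.vout + 1, G1.n + G2.n + 1), (G2.vout + 1 + G1.n, G1.n + G2.n + 1)]
    label := fun i =>
      if i = 0 then sp
      else if i < G1.n + 1 then G1.label (i - 1)
      else if i < G1.n + G2.n + 1 then G2.label (i - 1 - G1.n)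
      else jn }

end DFG

/-- The Copland data flow semantics `C(t,p,φ,e)`. -/
def sem : Phrase → Place → List ℕ → Evidence → DFG
  | .meas m q s, p, φ, e => .single (.msp p (.meas m q s p φ e))
  | .copy, p, _, e => .single (.cpy p e)
  | .sign, p, _, e => .single (.sig p (.sig e p))
  | .hash, p, _, e => .single (.hsh p (.hash e p))
  | .att q t, p, φ, e =>
      (DFG.single (.req p q e)).seqComp
        ((sem t q (1 :: φ) e).seqComp (.single (.rpy q p (eval t q (1 :: φ) e))))
  | .lseq t1 t2, p, φ, e =>
      (sem t1 p (1 :: φ) e).seqComp (sem t2 p (2 :: φ) (eval t1 p (1 :: φ) e))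
  | .bseq d1 d2 t1 t2, p, φ, e =>
      DFG.branch (.split p d1 d2 e)
        (.join p .seqJ (eval (.bseq d1 d2 t1 t2) p φ e)) d1 d2
        (sem t1 p (1 :: φ) (splitEv d1 e)) (sem t2 p (2 :: φ) (splitEv d2 e))
  | .bpar d1 d2 t1 t2, p, φ, e =>
      DFG.branch (.split p d1 d2 e)
        (.join p .parJ (eval (.bpar d1 d2 t1 t2) p φ e)) d1 d2
        (sem t1 p (1 :: φ) (splitEv d1 e)) (sem t2 p (2 :: φ) (splitEv d2 e))

namespace DFG

/-- A path of a data flow graph: a nonempty sequence of events of the graph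
successively related by flow edges. -/
def IsPath (G : DFG) (π : List ℕ) : Prop :=
  π ≠ [] ∧ (∀ v ∈ π, v < G.n) ∧ π.Chain' (fun a b => (a, b) ∈ G.edges)

/-- One step of the tamper set computation. -/
def tsStep (G : DFG) (s : Set Place) (v : ℕ) : Set Place :=
  match G.label v with
  | .sig p _ => {p} ∩ s
  | _ => s

/-- The tamper set `ts(π)` of a path: `ts(⟨v⟩)` is the set of all places if `v` is a
measurement event and `∅` otherwise; `ts(π § v) = {p} ∩ ts(π)` if `ℓ(v) = p:sig(e)`,
and `ts(π § v) = ts(π)` otherwise. -/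
def ts (G : DFG) (π : List ℕ) : Set Place :=
  match π with
  | [] => ∅
  | v :: rest =>
      rest.foldl (tsStep G)
        (match G.label v with
          | .msp _ _ => Set.univ
          | _ => ∅)

/-- A path is `p`-signing iff every signature event on it occurs at `p`. -/
def Signing (G : DFG) (π : List ℕ) (p : Place) : Prop :=
  ∀ v ∈ π, ∀ q e, G.label v = .sig q e → q = p

/-- A path `π = ⟨v, …, v'⟩` permits tampering (at `v'` with the evidence from `v`)
iff (1) `v` is a measurement event, (2) the length of `π` exceeds 1, and
(3) `π` is `ϱ(v')`-signing or `ϱ'(v')`-signing. -/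
def PermitsTamper (G : DFG) (π : List ℕ) : Prop :=
  (∀ v, π.head? = some v → (G.label v).IsMeas) ∧
  1 < π.length ∧
  (∀ v', π.getLast? = some v' →
    G.Signing π (G.label v').place ∨ G.Signing π (G.label v').recvPlace)

/-- A path `⟨v1,…,vn⟩` is local to place `p` iff every interior event has both
sending and receiving place `p`, and each endpoint has sending or receiving place `p`. -/
def LocalTo (G : DFG) (π : List ℕ) (p : Place) : Prop :=
  (∀ i v, 0 < i → i + 1 < π.length → π[i]? = some v →
      (G.label v).place = p ∧ (G.label v).recvPlace = p) ∧
  (∀ v, π.head? = some v → (G.label v).place = p ∨ (G.label v).recvPlace = p) ∧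
  (∀ v, π.getLast? = some v → (G.label v).place = p ∨ (G.label v).recvPlace = p)

/-- `π` is a path of `G` from `v` to `v'`. -/
def PathBetween (G : DFG) (v v' : ℕ) (π : List ℕ) : Prop :=
  G.IsPath π ∧ π.head? = some v ∧ π.getLast? = some v'

/-- A set `S` of events of `G` is a tamper strategy for `v` iff every path from `v`
to the output event of `G` contains an event `v' ∈ S` such that the prefix
`⟨v, …, v'⟩` of the path permits tampering. -/
def TamperStrategy (G : DFG) (S : Set ℕ) (v : ℕ) : Prop :=
  (∀ w ∈ S, w < G.n) ∧
  ∀ π, G.PathBetween v G.vout π →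
    ∃ v' ∈ S, ∃ π', π' <+: π ∧ π'.getLast? = some v' ∧ G.PermitsTamper π'

/-- `S` is a minimal tamper strategy for `v` iff it is a tamper strategy for `v` and
every tamper strategy for `v` included in `S` equals `S`. -/
def MinimalTamperStrategy (G : DFG) (S : Set ℕ) (v : ℕ) : Prop :=
  G.TamperStrategy S v ∧ ∀ S', G.TamperStrategy S' v → S' ⊆ S → S' = S

/-- A path `π = ⟨v1,…,vn⟩` is protected iff either `v1` is not a measurement event,
or for every `1 < i ≤ n`, if `vi` is a cross-place communication event then
`ts(⟨v1,…,vi⟩) ⊆ {ϱ(vi)}`. -/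
def ProtectedPath (G : DFG) (π : List ℕ) : Prop :=
  (∀ v, π.head? = some v → ¬ (G.label v).IsMeas) ∨
  (∀ i v, 0 < i → i < π.length → π[i]? = some v → (G.label v).IsCross →
      G.ts (π.take (i + 1)) ⊆ {(G.label v).place})

/-- A data flow graph is protected iff all of its paths are protected. -/
def Protected (G : DFG) : Prop :=
  ∀ π, G.IsPath π → G.ProtectedPath π

end DFG

/-- The tamper places function `τ` on evidence. -/
def tau : Evidence → Set Place
  | .empty => ∅
  | .meas _ _ _ _ _ _ => Set.univ
  | .hash e _ => tau e
  | .sig e p => {p} ∩ tau e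
  | .seqc e1 e2 => tau e1 ∪ tau e2
  | .parc e1 e2 => tau e1 ∪ tau e2

open scoped Classical in
/-- The Evidence Protection Program `epp(t,p,e)`. -/
noncomputable def epp : Phrase → Place → Evidence → Phrase
  | .meas m q s, _, _ => .meas m q s
  | .copy, _, _ => .copy
  | .sign, _, _ => .sign
  | .hash, _, _ => .hash
  | .lseq t1 t2, p, e =>
      .lseq (epp t1 p e) (epp t2 p (eval (epp t1 p e) p [] e))
  | .att q t, p, e =>
      if q = p then .att q (epp t p e)
      else if tau e ⊆ {p} then
        if tau (eval (epp t q e) q [] e) ⊆ {q} then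
          .att q (epp t q e)
        else
          .att q (.lseq (epp t q e) .sign)
      else
        if tau (eval (epp t q (.sig e p)) q [] (.sig e p)) ⊆ {q} then
          .lseq .sign (.att q (epp t q (.sig e p)))
        else
          .lseq .sign (.att q (.lseq (epp t q (.sig e p)) .sign))
  | .bseq d1 d2 t1 t2, p, e =>
      .bseq d1 d2 (epp t1 p (splitEv d1 e)) (epp t2 p (splitEv d2 e))
  | .bpar d1 d2 t1 t2, p, e =>
      .bpar d1 d2 (epp t1 p (splitEv d1 e)) (epp t2 p (splitEv d2 e))

end Copland

/-!
Tampering is bounded by evidence: along a flow edge from `u` to `v` the set `τ(ε(u))`, intersected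
with `{p}` when `v` is a signature at `p`, is contained in `τ(ε(v))`, and `τ(ε(v))` is the set of
all places when `v` is a measurement. By induction along the path, `ts(π) ⊆ τ(ε(v))` for every
path `π` ending at `v`, so a bound on `τ(ε(v))` is a bound on `ts(π)`.
-/

namespace Copland

/-- The tamper set of the one-event path at an event with the given label. -/
def Label.initialTs : Label → Set Place
  | .msp _ _ => Set.univ
  | _ => ∅

/-- The effect on a tamper set of extending a path by an event with the given label. -/
def Label.restrict : Label → Set Place → Set Place
  | .sig p _, s => {p} ∩ s
  | _, s => s

theorem Label.restrict_mono (l : Label) : Monotone l.restrict := by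
  intro s s' hs
  cases l <;> first | exact hs | exact Set.inter_subset_inter_right _ hs

namespace DFG

variable {G G₁ G₂ : DFG} {l l' sp jn : Label} {d₁ d₂ : Split} {s s₀ s₁ s₂ : Set Place}
  {π π' : List ℕ} {i v : ℕ}

theorem ts_singleton : G.ts [v] = (G.label v).initialTs := by
  simp only [ts, List.foldl_nil]
  cases G.label v <;> rfl

theorem tsStep_eq_restrict : G.tsStep s v = (G.label v).restrict s := by
  unfold tsStep Label.restrict
  cases G.label v <;> rfl

theorem ts_concat (hπ : π ≠ []) : G.ts (π ++ [v]) = (G.label v).restrict (G.ts π) := by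
  cases π with
  | nil => contradiction
  | cons u π =>
    simp only [ts, List.cons_append, List.foldl_append, List.foldl_cons, List.foldl_nil,
      tsStep_eq_restrict]

theorem IsPath.of_prefix (hπ : G.IsPath π) (hπ' : π' <+: π) (hne : π' ≠ []) : G.IsPath π' :=
  ⟨hne, fun v hv => hπ.2.1 v (hπ'.mem hv), hπ.2.2.prefix hπ'⟩

/-- All events mentioned by the graph are among its `n` events. Of `DFG.WF`, this is the part that
keeps the renumbered events of the components of `DFG.seqComp` and `DFG.branch` apart. -/
structure InRange (G : DFG) : Prop where
  vin_lt : G.vin < G.n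
  vout_lt : G.vout < G.n
  edge_lt : ∀ x ∈ G.edges, x.1 < G.n ∧ x.2 < G.n

/-- Some event carries the label `l`. Like `DFG.Flow`, this refers to labels instead of events, so
that the renumbering of events in composed graphs does not show. -/
def HasLabel (G : DFG) (l : Label) : Prop :=
  ∃ v < G.n, G.label v = l

/-- Some flow edge leads from an event labeled `l` to an event labeled `l'`. -/
def Flow (G : DFG) (l l' : Label) : Prop :=
  ∃ x ∈ G.edges, G.label x.1 = l ∧ G.label x.2 = l'

theorem seqComp_label_left (hi : i < G₁.n) : (G₁.seqComp G₂).label i = G₁.label i :=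
  if_pos hi

theorem seqComp_label_right : (G₁.seqComp G₂).label (G₁.n + i) = G₂.label i := by
  simp [seqComp]

theorem InRange.seqComp (h₁ : G₁.InRange) (h₂ : G₂.InRange) : (G₁.seqComp G₂).InRange where
  vin_lt := Nat.lt_add_right _ h₁.vin_lt
  vout_lt := Nat.add_lt_add_left h₂.vout_lt _
  edge_lt x hx := by
    simp only [DFG.seqComp, List.mem_append, List.mem_map, List.mem_singleton] at hx ⊢
    grind [InRange]

theorem HasLabel.of_seqComp (h : (G₁.seqComp G₂).HasLabel l) : G₁.HasLabel l ∨ G₂.HasLabel l := by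
  obtain ⟨v, hv, rfl⟩ := h
  rcases lt_or_ge v G₁.n with hlt | hge
  · exact .inl ⟨v, hlt, (seqComp_label_left hlt).symm⟩
  · obtain ⟨w, rfl⟩ := Nat.exists_eq_add_of_le hge
    exact .inr ⟨w, Nat.lt_of_add_lt_add_left hv, seqComp_label_right.symm⟩

theorem Flow.of_seqComp (h₁ : G₁.InRange) (h : (G₁.seqComp G₂).Flow l l') :
    G₁.Flow l l' ∨ G₂.Flow l l' ∨ (l = G₁.label G₁.vout ∧ l' = G₂.label G₂.vin) := by
  obtain ⟨x, hx, rfl, rfl⟩ := h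
  have hx' : (x ∈ G₁.edges ∨ ∃ y ∈ G₂.edges, (G₁.n + y.1, G₁.n + y.2) = x) ∨
      x = (G₁.vout, G₁.n + G₂.vin) := by
    simpa only [seqComp, List.mem_append, List.mem_map, List.mem_singleton] using hx
  rcases hx' with (hx | ⟨y, hy, rfl⟩) | rfl
  · have ⟨hlt, hlt'⟩ := h₁.edge_lt x hx
    exact .inl ⟨x, hx, (seqComp_label_left hlt).symm, (seqComp_label_left hlt').symm⟩
  · exact .inr (.inl ⟨y, hy, seqComp_label_right.symm, seqComp_label_right.symm⟩)
  · exact .inr (.inr ⟨seqComp_label_left h₁.vout_lt, seqComp_label_right⟩)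

theorem branch_label_left (hi : i < G₁.n) :
    (branch sp jn d₁ d₂ G₁ G₂).label (i + 1) = G₁.label i := by
  simp [branch, hi]

theorem branch_label_right (hi : i < G₂.n) :
    (branch sp jn d₁ d₂ G₁ G₂).label (i + 1 + G₁.n) = G₂.label i := by
  have hpos : i + 1 + G₁.n ≠ 0 := by omega
  have hge : ¬ i + 1 + G₁.n < G₁.n + 1 := by omega
  have hlt : i + 1 + G₁.n < G₁.n + G₂.n + 1 := by omega
  have hsub : i + 1 + G₁.n - 1 - G₁.n = i := by omega
  simp only [branch, if_neg hpos, if_neg hge, if_pos hlt, hsub]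

theorem branch_label_join : (branch sp jn d₁ d₂ G₁ G₂).label (G₁.n + G₂.n + 1) = jn := by
  simp [branch]

theorem mem_edges_branch {x : ℕ × ℕ} :
    x ∈ (branch sp jn d₁ d₂ G₁ G₂).edges ↔
      (∃ y ∈ G₁.edges, x = (y.1 + 1, y.2 + 1)) ∨
      (∃ y ∈ G₂.edges, x = (y.1 + 1 + G₁.n, y.2 + 1 + G₁.n)) ∨
      (d₁ = .plus ∧ x = (0, G₁.vin + 1)) ∨
      (d₂ = .plus ∧ x = (0, G₂.vin + 1 + G₁.n)) ∨
      x = (G₁.vout + 1, G₁.n + G₂.n + 1) ∨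
      x = (G₂.vout + 1 + G₁.n, G₁.n + G₂.n + 1) := by
  simp only [branch, List.mem_append, List.mem_map, List.mem_ite_nil_right, List.mem_cons,
    List.not_mem_nil, or_false, or_assoc, eq_comm (a := x)]

theorem InRange.branch (h₁ : G₁.InRange) (h₂ : G₂.InRange) :
    (branch sp jn d₁ d₂ G₁ G₂).InRange where
  vin_lt := Nat.succ_pos _
  vout_lt := Nat.lt_succ_self _
  edge_lt x hx := by
    rw [mem_edges_branch] at hx
    have hn : (DFG.branch sp jn d₁ d₂ G₁ G₂).n = G₁.n + G₂.n + 2 := rfl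
    grind [InRange]

theorem HasLabel.of_branch (h : (branch sp jn d₁ d₂ G₁ G₂).HasLabel l) :
    l = sp ∨ G₁.HasLabel l ∨ G₂.HasLabel l ∨ l = jn := by
  obtain ⟨v, hv, rfl⟩ := h
  have hv : v < G₁.n + G₂.n + 2 := hv
  obtain rfl | ⟨i, hi, rfl⟩ | ⟨i, hi, rfl⟩ | rfl : v = 0 ∨ (∃ i < G₁.n, v = i + 1) ∨
      (∃ i < G₂.n, v = i + 1 + G₁.n) ∨ v = G₁.n + G₂.n + 1 := by
    by_cases hl : v < G₁.n + 1
    · rcases v with _ | i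
      · exact .inl rfl
      · exact .inr (.inl ⟨i, by omega, rfl⟩)
    · by_cases hr : v < G₁.n + G₂.n + 1
      · exact .inr (.inr (.inl ⟨v - 1 - G₁.n, by omega, by omega⟩))
      · exact .inr (.inr (.inr (by omega)))
  · exact .inl rfl
  · exact .inr (.inl ⟨i, hi, (branch_label_left hi).symm⟩)
  · exact .inr (.inr (.inl ⟨i, hi, (branch_label_right hi).symm⟩))
  · exact .inr (.inr (.inr branch_label_join))

theorem Flow.of_branch (h₁ : G₁.InRange) (h₂ : G₂.InRange)
    (h : (branch sp jn d₁ d₂ G₁ G₂).Flow l l') :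
    G₁.Flow l l' ∨ G₂.Flow l l' ∨
      (d₁ = .plus ∧ l = sp ∧ l' = G₁.label G₁.vin) ∨
      (d₂ = .plus ∧ l = sp ∧ l' = G₂.label G₂.vin) ∨
      (l = G₁.label G₁.vout ∧ l' = jn) ∨
      (l = G₂.label G₂.vout ∧ l' = jn) := by
  obtain ⟨x, hx, rfl, rfl⟩ := h
  rcases mem_edges_branch.1 hx with ⟨y, hy, rfl⟩ | ⟨y, hy, rfl⟩ | ⟨hd, rfl⟩ | ⟨hd, rfl⟩ | rfl | rfl
  · have ⟨hlt, hlt'⟩ := h₁.edge_lt y hy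
    exact .inl ⟨y, hy, (branch_label_left hlt).symm, (branch_label_left hlt').symm⟩
  · have ⟨hlt, hlt'⟩ := h₂.edge_lt y hy
    exact .inr (.inl ⟨y, hy, (branch_label_right hlt).symm, (branch_label_right hlt').symm⟩)
  · exact .inr (.inr (.inl ⟨hd, rfl, branch_label_left h₁.vin_lt⟩))
  · exact .inr (.inr (.inr (.inl ⟨hd, rfl, branch_label_right h₂.vin_lt⟩)))
  · exact .inr (.inr (.inr (.inr (.inl ⟨branch_label_left h₁.vout_lt, branch_label_join⟩))))
  · exact .inr (.inr (.inr (.inr (.inr ⟨branch_label_right h₂.vout_lt, branch_label_join⟩))))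

/-- The invariant bounding tamper sets by the tamper places `τ(ε(v))` at each event `v` of `G`: they
cover the tamper set of the one-event path at `v`, and the cover extends along every flow edge.
The sets `s` and `s'` stand for the tamper places of the evidence flowing into and out of `G`, which
is what makes the invariant compose. -/
structure TamperSound (G : DFG) (s s' : Set Place) : Prop extends G.InRange where
  initial : ∀ l, G.HasLabel l → l.initialTs ⊆ tau l.evid
  flow : ∀ l l', G.Flow l l' → l'.restrict (tau l.evid) ⊆ tau l'.evid
  input : (G.label G.vin).restrict s ⊆ tau (G.label G.vin).evid
  output : tau (G.label G.vout).evid ⊆ s'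

namespace TamperSound

theorem single (hinit : l.initialTs ⊆ tau l.evid) (hin : l.restrict s ⊆ tau l.evid) :
    (single l).TamperSound s (tau l.evid) where
  vin_lt := Nat.zero_lt_one
  vout_lt := Nat.zero_lt_one
  edge_lt _ h := absurd h List.not_mem_nil
  initial := by rintro _ ⟨_, _, rfl⟩; exact hinit
  flow := by rintro _ _ ⟨_, h, _⟩; exact absurd h List.not_mem_nil
  input := hin
  output := subset_rfl

theorem seqComp (h₁ : G₁.TamperSound s₀ s₁) (h₂ : G₂.TamperSound s₁ s₂) :
    (G₁.seqComp G₂).TamperSound s₀ s₂ where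
  toInRange := h₁.toInRange.seqComp h₂.toInRange
  initial l hl := hl.of_seqComp.elim (h₁.initial l) (h₂.initial l)
  flow l l' hl := by
    rcases hl.of_seqComp h₁.toInRange with hl | hl | ⟨rfl, rfl⟩
    · exact h₁.flow l l' hl
    · exact h₂.flow l l' hl
    · exact (Label.restrict_mono _ h₁.output).trans h₂.input
  input := by
    change ((G₁.seqComp G₂).label G₁.vin).restrict s₀ ⊆ tau ((G₁.seqComp G₂).label G₁.vin).evid
    rw [seqComp_label_left h₁.vin_lt]
    exact h₁.input
  output := by
    change tau ((G₁.seqComp G₂).label (G₁.n + G₂.vout)).evid ⊆ s₂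
    rw [seqComp_label_right]
    exact h₂.output

theorem branch {p p' : Place} {o : JoinOp} {e e' : Evidence}
    (h₁ : G₁.TamperSound (tau (splitEv d₁ e)) s₁) (h₂ : G₂.TamperSound (tau (splitEv d₂ e)) s₂)
    (he' : s₁ ∪ s₂ ⊆ tau e') :
    (branch (.split p d₁ d₂ e) (.join p' o e') d₁ d₂ G₁ G₂).TamperSound (tau e) (tau e') where
  toInRange := h₁.toInRange.branch h₂.toInRange
  initial l hl := by
    rcases hl.of_branch with rfl | hl | hl | rfl
    · exact Set.empty_subset _
    · exact h₁.initial l hl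
    · exact h₂.initial l hl
    · exact Set.empty_subset _
  flow l l' hl := by
    rcases hl.of_branch h₁.toInRange h₂.toInRange with
      hl | hl | ⟨rfl, rfl, rfl⟩ | ⟨rfl, rfl, rfl⟩ | ⟨rfl, rfl⟩ | ⟨rfl, rfl⟩
    · exact h₁.flow l l' hl
    · exact h₂.flow l l' hl
    · exact h₁.input
    · exact h₂.input
    · exact h₁.output.trans (Set.subset_union_left.trans he')
    · exact h₂.output.trans (Set.subset_union_right.trans he')
  input := subset_rfl
  output := by
    change tau ((DFG.branch _ _ _ _ G₁ G₂).label (G₁.n + G₂.n + 1)).evid ⊆ tau e'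
    rw [branch_label_join]
    rfl

theorem ts_concat_subset_tau (hG : G.TamperSound s₀ s₁) (hπ : G.IsPath (π ++ [v])) :
    G.ts (π ++ [v]) ⊆ tau (G.label v).evid := by
  induction π using List.reverseRecOn generalizing v with
  | nil =>
    rw [List.nil_append, ts_singleton]
    exact hG.initial _ ⟨v, hπ.2.1 v List.mem_cons_self, rfl⟩
  | append_singleton π u ih =>
    have hne : π ++ [u] ≠ [] := List.concat_ne_nil u π
    have hprefix : G.ts (π ++ [u]) ⊆ tau (G.label u).evid :=
      ih (hπ.of_prefix (List.prefix_append _ _) hne)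
    have hedge : (u, v) ∈ G.edges := by
      simpa using (List.isChain_append.1 hπ.2.2).2.2
    rw [ts_concat hne]
    exact (Label.restrict_mono _ hprefix).trans (hG.flow _ _ ⟨_, hedge, rfl, rfl⟩)

theorem protected_of_cross_subset (hG : G.TamperSound s₀ s₁)
    (h : ∀ v < G.n, (G.label v).IsCross → tau (G.label v).evid ⊆ {(G.label v).place}) :
    G.Protected := by
  refine fun π hπ => .inr fun i v _ _ hv hcross => ?_
  have htake : π.take (i + 1) = π.take i ++ [v] := by
    rw [List.take_add_one, hv, Option.toList_some]
  have hpath : G.IsPath (π.take i ++ [v]) :=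
    htake ▸ hπ.of_prefix (List.take_prefix _ _) (htake ▸ List.concat_ne_nil v _)
  rw [htake]
  exact (hG.ts_concat_subset_tau hpath).trans (h v (hπ.2.1 v (List.mem_of_getElem? hv)) hcross)

end TamperSound

end DFG

theorem sem_tamperSound (t : Phrase) (p : Place) (φ : List ℕ) (e : Evidence) :
    (sem t p φ e).TamperSound (tau e) (tau (eval t p φ e)) := by
  induction t generalizing p φ e with
  | meas m q s => exact .single subset_rfl (Set.subset_univ _)
  | copy | sign | hash => exact .single (Set.empty_subset _) subset_rfl
  | att q t ih =>
    exact .seqComp (.single (Set.empty_subset _) subset_rfl)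
      (.seqComp (ih q (1 :: φ) e) (.single (Set.empty_subset _) subset_rfl))
  | lseq t₁ t₂ ih₁ ih₂ => exact .seqComp (ih₁ _ _ _) (ih₂ _ _ _)
  | bseq d₁ d₂ t₁ t₂ ih₁ ih₂ | bpar d₁ d₂ t₁ t₂ ih₁ ih₂ =>
    exact .branch (ih₁ _ _ _) (ih₂ _ _ _) subset_rfl

end Copland

open Copland in
/-- Evidence-centric criterion for protection: if every cross-place communication
event `v` of `D = C(t,p,φ,e)` satisfies `τ(ε(v)) ⊆ {ϱ(v)}`, then `D` is protected. -/
theorem protected_of_cross_place_sub (t : Phrase) (p : Place) (φ : List ℕ)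
    (e : Evidence)
    (h : ∀ v, v < (sem t p φ e).n → ((sem t p φ e).label v).IsCross →
      tau (((sem t p φ e).label v).evid) ⊆ {((sem t p φ e).label v).place}) :
    (sem t p φ e).Protected :=
  (sem_tamperSound t p φ e).protected_of_cross_subset h
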